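/- Every finitely generated infinite group admits a transitive translation-like action by some free group, namely either by ℤ or by a finitely generated non-abelian free group. -/

import Mathlib

open scoped Pointwise

/-- A right action of a group `H` on a type `X`. -/
structure RightAction (H X : Type*) [Group H] where
  act : X → H → X
  act_one : ∀ x, act x 1 = x
  act_mul : ∀ x h k, act (act x h) k = act x (h * k)

/-- A right action is translation-like w.r.t. a distance function `d` if it is free and
every element moves points a uniformly bounded distance. -/
def RightAction.IsTranslationLike {H X : Type*} [Group H]
    (a : RightAction H X) (d : X → X → ℝ) : Prop :=
  (∀ (x : X) (h : H), a.act x h = x → h = 1) ∧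
  (∀ h : H, ∃ C : ℝ, ∀ x : X, d x (a.act x h) ≤ C)

/-- A right action is transitive if any point can be moved to any other point. -/
def RightAction.IsTransitive {H X : Type*} [Group H] (a : RightAction H X) : Prop :=
  ∀ x y : X, ∃ h : H, a.act x h = y

/-- `S` is a finite generating set of the group `G`. -/
def IsFinGenSet {G : Type*} [Group G] (S : Set G) : Prop :=
  S.Finite ∧ Subgroup.closure S = ⊤

/-- The left-invariant word-length distance associated to a generating set `S`:
`wordDist S g h` is the least `n` with `g⁻¹ * h ∈ (S ∪ S⁻¹) ^ n`. -/
noncomputable def wordDist {G : Type*} [Group G] (S : Set G) (g h : G) : ℕ :=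
  sInf {n : ℕ | g⁻¹ * h ∈ (S ∪ S⁻¹) ^ n}

/-- The word metric as a real-valued distance function. -/
noncomputable def wordMetric {G : Type*} [Group G] (S : Set G) : G → G → ℝ :=
  fun g h => (wordDist S g h : ℝ)

/-!
Let `Γ` be a Cayley graph of `G`. It suffices to find a bijection `e` from the free group to `Γ`
such that `e w` and `e (w * x)` are boundedly close for every generator `x`: transporting the right
translations along `e` gives the action, and vertices of `Γ` at distance at most `D` differ by one
of finitely many right multiplications, so the action is translation-like for any left-invariant
distance.

If `Γ` has at most two ends, it splits into at most two one-ended pieces, and each of them is the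
trace of an injective ray with bounded jumps: finite initial paths are extended by swallowing finite
connected sets that leave a connected remainder, each traversed by a Hamiltonian path of its cube.
Two rays joined at their starting points form a copy of `ℤ`.

If `Γ` has three ends, some vertex, hence by homogeneity every vertex, has three disjoint branches
at a fixed scale, two of which avoid a root `o`. On a maximal separated set `Z`, moving from a point
to the point of `Z` nearest to `o` in each of the two branches is injective and leads away from `o`.
Iterating gives arbitrarily many children, and spending some of them on encoding the position of a
vertex relative to `Z` extends the map from `Z` to all vertices. Conversely, each vertex other than
`o` is determined by a neighbour closer to `o` together with a label from a finite set. By a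
Schröder–Bernstein argument the two injections combine into a tree on all vertices that is
isomorphic to the Cayley tree of a free group.
-/

namespace TranslationLike

section Connectivity

variable {V : Type*} {Γ : SimpleGraph V} {A B E W : Set V}

theorem preconnected_induce_iff_exists_adj :
    (Γ.induce A).Preconnected ↔ ∀ Y : Set V, (A ∩ Y).Nonempty → (A \ Y).Nonempty →
      ∃ y ∈ A ∩ Y, ∃ z ∈ A \ Y, Γ.Adj y z := by
  constructor
  · rintro hA Y ⟨y, hyA, hyY⟩ ⟨z, hzA, hzY⟩
    obtain ⟨p⟩ := hA ⟨y, hyA⟩ ⟨z, hzA⟩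
    obtain ⟨d, -, hd, hd'⟩ := p.exists_boundary_dart (Subtype.val ⁻¹' Y) hyY hzY
    exact ⟨d.fst, ⟨d.fst.2, hd⟩, d.snd, ⟨d.snd.2, hd'⟩, d.adj⟩
  · intro hA x y
    by_contra hxy
    obtain ⟨u, ⟨_, _, hxu⟩, v, ⟨hv, hxv⟩, huv⟩ :=
      hA {z | ∃ hz : z ∈ A, (Γ.induce A).Reachable x ⟨z, hz⟩} ⟨x, x.2, x.2, .rfl⟩
        ⟨y, y.2, fun ⟨_, h⟩ => hxy h⟩
    exact hxv ⟨hv, hxu.trans (SimpleGraph.Adj.reachable (G := Γ.induce A) huv)⟩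

theorem exists_finite_connected_subset (hE : (Γ.induce E).Preconnected) {x y : V}
    (hx : x ∈ E) (hy : y ∈ E) :
    ∃ W ⊆ E, W.Finite ∧ x ∈ W ∧ y ∈ W ∧ (Γ.induce W).Connected := by
  obtain ⟨p⟩ := hE ⟨x, hx⟩ ⟨y, hy⟩
  let q := p.map (SimpleGraph.Embedding.induce E).toHom
  refine ⟨{v | v ∈ q.support}, fun v hv => ?_, List.finite_toSet _, q.start_mem_support,
    q.end_mem_support, q.connected_induce_support⟩
  obtain ⟨u, -, rfl⟩ := List.mem_map.1 (p.support_map _ ▸ hv)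
  exact u.2

/-- `B` is the vertex set of a connected component of the subgraph of `Γ` induced on `A`. -/
structure IsComponent (Γ : SimpleGraph V) (A B : Set V) : Prop where
  subset : B ⊆ A
  connected : (Γ.induce B).Connected
  mem_of_adj : ∀ ⦃y⦄, y ∈ B → ∀ ⦃z⦄, z ∈ A → Γ.Adj y z → z ∈ B

theorem exists_isComponent (Γ : SimpleGraph V) {x : V} (hx : x ∈ A) :
    ∃ B, x ∈ B ∧ IsComponent Γ A B := by
  let S : Set (Set V) := {B | B ⊆ A ∧ x ∈ B ∧ (Γ.induce B).Connected}
  have hxS : {x} ∈ S := ⟨by simpa, rfl, SimpleGraph.Connected.of_subsingleton⟩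
  refine ⟨⋃₀ S, ⟨_, hxS, rfl⟩, Set.sUnion_subset fun B hB => hB.1, ?_, ?_⟩
  · exact SimpleGraph.induce_sUnion_connected_of_pairwise_not_disjoint ⟨_, hxS⟩
      (fun hB hB' => ⟨x, hB.2.1, hB'.2.1⟩) fun hB => hB.2.2
  · rintro y ⟨B, ⟨hBA, hxB, hB⟩, hyB⟩ z hz hyz
    refine ⟨B ∪ {y, z}, ⟨?_, .inl hxB, ?_⟩, by simp⟩
    · simp [Set.insert_subset_iff, hBA, hBA hyB, hz]
    · exact SimpleGraph.induce_union_connected hB.preconnected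
        (SimpleGraph.induce_pair_connected_of_adj hyz).preconnected ⟨y, hyB, by simp⟩

theorem IsComponent.exists_adj (hB : IsComponent Γ (E \ W) B) (hE : (Γ.induce E).Preconnected)
    (hW : (E ∩ W).Nonempty) : ∃ y ∈ B, ∃ w ∈ W, w ∈ E ∧ Γ.Adj y w := by
  obtain ⟨b⟩ := hB.connected.nonempty
  obtain ⟨w, hwE, hwW⟩ := hW
  obtain ⟨y, ⟨-, hyB⟩, z, ⟨hzE, hzB⟩, hyz⟩ := preconnected_induce_iff_exists_adj.1 hE B
    ⟨b, (hB.subset b.2).1, b.2⟩ ⟨w, hwE, fun hwB => (hB.subset hwB).2 hwW⟩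
  exact ⟨y, hyB, z, by_contra fun hzW => hzB (hB.mem_of_adj hyB ⟨hzE, hzW⟩ hyz), hzE, hyz⟩

theorem IsComponent.preconnected_diff (hB : IsComponent Γ (E \ W) B)
    (hE : (Γ.induce E).Preconnected) (hWE : W ⊆ E) (hW : (Γ.induce W).Connected) :
    (Γ.induce (E \ B)).Preconnected := by
  have hWB : W ⊆ E \ B := fun w hw => ⟨hWE hw, fun hwB => (hB.subset hwB).2 hw⟩
  rw [preconnected_induce_iff_exists_adj]
  by_contra! ⟨Y, hY, hY', hcut⟩
  obtain ⟨w, hw⟩ := hW.nonempty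
  wlog hwY : w ∈ Y generalizing Y
  · exact this Yᶜ hY' (by simpa [Set.sdiff_compl] using hY)
      (fun y hy z hz hyz => hcut z (by simpa [Set.sdiff_compl] using hz) y hy hyz.symm) hwY
  have hWY : W ⊆ Y := by
    by_contra hWY
    obtain ⟨v, hvW, hvY⟩ := Set.not_subset.1 hWY
    obtain ⟨y, hy, z, hz, hyz⟩ := preconnected_induce_iff_exists_adj.1 hW.preconnected Y
      ⟨w, hw, hwY⟩ ⟨v, hvW, hvY⟩
    exact hcut y ⟨hWB hy.1, hy.2⟩ z ⟨hWB hz.1, hz.2⟩ hyz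
  obtain ⟨v, hvEB, hvY⟩ := hY'
  obtain ⟨y, ⟨hyE, hyBY⟩, z, ⟨hzE, hzBY⟩, hyz⟩ := preconnected_induce_iff_exists_adj.1 hE (B ∪ Y)
    ⟨w, hWE hw, .inr hwY⟩ ⟨v, hvEB.1, by simp [hvEB.2, hvY]⟩
  simp only [Set.mem_union, not_or] at hzBY
  by_cases hyB : y ∈ B
  · exact hzBY.1 (hB.mem_of_adj hyB ⟨hzE, fun hzW => hzBY.2 (hWY hzW)⟩ hyz)
  · exact hcut y ⟨⟨hyE, hyB⟩, hyBY.resolve_left hyB⟩ z ⟨⟨hzE, hzBY.1⟩, hzBY.2⟩ hyz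

end Connectivity

section HamiltonianPaths

variable {V : Type*} {Γ : SimpleGraph V} {k : ℕ∞} {A N : Set V} {L K : List V}

/-- `L` enumerates the vertices in `N` without repetition, each at distance at most `k` from its
predecessor: a Hamiltonian path of the `k`-th power of `Γ` restricted to `N`. Extended distances
keep the notion meaningful when `Γ` is disconnected. -/
structure IsPowerPath (Γ : SimpleGraph V) (k : ℕ∞) (N : Set V) (L : List V) : Prop where
  nodup : L.Nodup
  mem_iff : ∀ v, v ∈ L ↔ v ∈ N
  isChain : L.IsChain fun u v => Γ.edist u v ≤ k

theorem IsPowerPath.append (hL : IsPowerPath Γ k A L) (hK : IsPowerPath Γ k N K)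
    (hAN : Disjoint A N) (h : ∀ u ∈ L.getLast?, ∀ v ∈ K.head?, Γ.edist u v ≤ k) :
    IsPowerPath Γ k (A ∪ N) (L ++ K) where
  nodup := hL.nodup.append hK.nodup fun v hvL hvK =>
    Set.disjoint_left.1 hAN ((hL.mem_iff v).1 hvL) ((hK.mem_iff v).1 hvK)
  mem_iff v := by simp [hL.mem_iff, hK.mem_iff]
  isChain := List.isChain_append.2 ⟨hL.isChain, hK.isChain, h⟩

theorem IsPowerPath.reverse (hL : IsPowerPath Γ k N L) : IsPowerPath Γ k N L.reverse where
  nodup := List.nodup_reverse.2 hL.nodup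
  mem_iff v := by simp [hL.mem_iff]
  isChain := List.isChain_reverse.2 (by simpa only [flip, Γ.edist_comm] using hL.isChain)

theorem IsPowerPath.mono {l : ℕ∞} (hkl : k ≤ l) (hL : IsPowerPath Γ k N L) :
    IsPowerPath Γ l N L :=
  ⟨hL.nodup, hL.mem_iff, hL.isChain.imp fun _ _ h => h.trans hkl⟩

theorem exists_isComponent_diff_singleton (hN : (Γ.induce N).Preconnected) {a b : V}
    (ha : a ∈ N) (hb : b ∈ N) (hNa : ¬N ⊆ {a}) :
    ∃ B, IsComponent Γ (N \ {a}) B ∧ (b ≠ a → b ∈ B) ∧ (∃ m ∈ B, Γ.Adj a m) ∧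
      (Γ.induce (N \ B)).Preconnected := by
  obtain ⟨t, htN, hta, htb⟩ : ∃ t ∈ N, t ≠ a ∧ (b ≠ a → t = b) := by
    by_cases hba : b = a
    · obtain ⟨t, ht, hta⟩ := Set.not_subset.1 hNa
      exact ⟨t, ht, hta, fun h => (h hba).elim⟩
    · exact ⟨b, hb, hba, fun _ => rfl⟩
  obtain ⟨B, htB, hB⟩ := exists_isComponent Γ (A := N \ {a}) ⟨htN, hta⟩
  obtain ⟨m, hmB, c, hca, -, hmc⟩ := hB.exists_adj hN ⟨a, ha, rfl⟩
  exact ⟨B, hB, fun hba => htb hba ▸ htB, ⟨m, hmB, hca ▸ hmc.symm⟩,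
    hB.preconnected_diff hN (by simpa) SimpleGraph.Connected.of_subsingleton⟩

-- Sekanina: the cube of a finite connected graph is Hamilton-connected. The induction splits off
-- a component of `N \ {a}`; ending next to `b` rather than at `b` makes room for the case `a = b`.
theorem exists_isPowerPath_three (hN : N.Finite) (hconn : (Γ.induce N).Preconnected) {a b : V}
    (ha : a ∈ N) (hb : b ∈ N) :
    ∃ L z, IsPowerPath Γ 3 N L ∧ L.head? = some a ∧ L.getLast? = some z ∧ Γ.edist z b ≤ 1 := by
  induction hn : N.ncard using Nat.strong_induction_on generalizing N a b with
  | _ n ih =>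
  subst hn
  by_cases hNa : N ⊆ {a}
  · obtain rfl : N = {a} := Set.Subset.antisymm hNa (by simpa)
    exact ⟨[a], a, ⟨by simp, by simp, by simp⟩, rfl, rfl, by simp_all⟩
  obtain ⟨B, hB, hbB, ⟨m, hmB, ham⟩, hcompl⟩ := exists_isComponent_diff_singleton hconn ha hb hNa
  have hBN : B ⊆ N := hB.subset.trans Set.sdiff_subset
  have haB : a ∉ B := fun h => (hB.subset h).2 rfl
  replace ham := SimpleGraph.edist_le_one_iff_adj_or_eq.2 (.inl ham)
  have ihB {c : V} (hc : c ∈ B) := ih _ (Set.ncard_lt_ncard ⟨hBN, fun h => haB (h ha)⟩ hN)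
    (hN.subset hBN) hB.connected.preconnected hmB hc rfl
  obtain ⟨L, z, hL, hLa, hLz, hza⟩ := ih _
    (Set.ncard_lt_ncard (hBN.sdiff_ssubset_of_nonempty ⟨m, hmB⟩) hN) hN.sdiff hcompl
    ⟨ha, haB⟩ ⟨ha, haB⟩ rfl
  obtain ⟨K, y, w, hK, hKy, hKw, hy, hw⟩ : ∃ K y w, IsPowerPath Γ 3 B K ∧ K.head? = some y ∧
      K.getLast? = some w ∧ Γ.edist a y ≤ 2 ∧ Γ.edist w b ≤ 1 := by
    by_cases hba : b = a
    · obtain ⟨K, y, hK, hKm, hKy, hym⟩ := ihB hmB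
      refine ⟨K.reverse, y, m, hK.reverse, by simpa, by simpa, ?_, ?_⟩
      · calc Γ.edist a y ≤ Γ.edist a m + Γ.edist m y := Γ.edist_triangle
          _ ≤ 1 + 1 := add_le_add ham (Γ.edist_comm ▸ hym)
          _ = 2 := one_add_one_eq_two
      · rwa [hba, Γ.edist_comm]
    · obtain ⟨K, w, hK, hKm, hKw, hwb⟩ := ihB (hbB hba)
      exact ⟨K, m, w, hK, hKm, hKw, ham.trans one_le_two, hwb⟩
  refine ⟨L ++ K, w, ?_, by simp [hLa], by simp [hKw], hw⟩
  rw [← Set.sdiff_union_of_subset hBN]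
  refine hL.append hK Set.disjoint_sdiff_left ?_
  simp only [hLz, hKy, Option.mem_some_iff, forall_eq']
  calc Γ.edist z y ≤ Γ.edist z a + Γ.edist a y := Γ.edist_triangle
    _ ≤ 1 + 2 := add_le_add hza hy
    _ = 3 := by norm_num

end HamiltonianPaths

section Ends

variable {V : Type*} {Γ : SimpleGraph V} {A B C D F : Set V}

/-- The set of endpoints of the edges between `A` and its complement. Taking both endpoints of each
edge makes the boundary symmetric under complementation. -/
def vertexBoundary (Γ : SimpleGraph V) (A : Set V) : Set V :=
  {x | ∃ y, Γ.Adj x y ∧ ¬(x ∈ A ↔ y ∈ A)}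

theorem mem_vertexBoundary_left {x y : V} (h : Γ.Adj x y) (hx : x ∈ A) (hy : y ∉ A) :
    x ∈ vertexBoundary Γ A :=
  ⟨y, h, by tauto⟩

theorem mem_vertexBoundary_right {x y : V} (h : Γ.Adj x y) (hx : x ∈ A) (hy : y ∉ A) :
    y ∈ vertexBoundary Γ A :=
  ⟨x, h.symm, by tauto⟩

theorem vertexBoundary_compl (Γ : SimpleGraph V) (A : Set V) :
    vertexBoundary Γ Aᶜ = vertexBoundary Γ A := by
  simp [vertexBoundary, not_iff_not]

theorem vertexBoundary_inter_subset (Γ : SimpleGraph V) (A B : Set V) :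
    vertexBoundary Γ (A ∩ B) ⊆ vertexBoundary Γ A ∪ vertexBoundary Γ B := by
  rintro x ⟨y, hxy, h⟩
  by_cases hA : x ∈ A ↔ y ∈ A
  · exact .inr ⟨y, hxy, fun hB => h (and_congr hA hB)⟩
  · exact .inl ⟨y, hxy, hA⟩

theorem vertexBoundary_diff_subset (Γ : SimpleGraph V) (A B : Set V) :
    vertexBoundary Γ (A \ B) ⊆ vertexBoundary Γ A ∪ vertexBoundary Γ B := by
  simpa only [Set.sdiff_eq, vertexBoundary_compl] using vertexBoundary_inter_subset Γ A Bᶜ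

theorem finite_vertexBoundary_of_finite [Γ.LocallyFinite] (hA : A.Finite) :
    (vertexBoundary Γ A).Finite := by
  refine (hA.union (hA.biUnion fun a _ => (Γ.neighborSet a).toFinite)).subset ?_
  rintro x ⟨y, hxy, h⟩
  by_cases hx : x ∈ A
  · exact .inl hx
  · exact .inr (Set.mem_biUnion (show y ∈ A by tauto) hxy.symm)

theorem IsComponent.vertexBoundary_subset (hB : IsComponent Γ A B) :
    vertexBoundary Γ B ⊆ vertexBoundary Γ A := by
  rintro x ⟨y, hxy, h⟩
  by_cases hx : x ∈ B
  · exact mem_vertexBoundary_left hxy (hB.subset hx) fun hy =>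
      h (by simp [hx, hB.mem_of_adj hx hy hxy])
  · have hy : y ∈ B := by tauto
    exact mem_vertexBoundary_right hxy.symm (hB.subset hy) fun hx' =>
      hx (hB.mem_of_adj hy hx' hxy.symm)

theorem exists_mem_vertexBoundary (hΓ : Γ.Preconnected) (hA : A.Nonempty) (hA' : Aᶜ.Nonempty) :
    ∃ x ∈ A, x ∈ vertexBoundary Γ A := by
  obtain ⟨x, hx⟩ := hA
  obtain ⟨y, hy⟩ := hA'
  obtain ⟨p⟩ := hΓ x y
  obtain ⟨d, -, hd, hd'⟩ := p.exists_boundary_dart A hx hy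
  exact ⟨d.fst, hd, mem_vertexBoundary_left d.adj hd hd'⟩

theorem exists_finite_isComponent_cover (hΓ : Γ.Preconnected) (hA : (vertexBoundary Γ A).Finite) :
    ∃ 𝓑 : Set (Set V), 𝓑.Finite ∧ (∀ B ∈ 𝓑, IsComponent Γ A B) ∧ A ⊆ ⋃₀ 𝓑 := by
  obtain rfl | ⟨a, ha⟩ := A.eq_empty_or_nonempty
  · exact ⟨∅, by simp⟩
  choose! comp hmem hcomp using fun x (hx : x ∈ A) => exists_isComponent Γ hx
  let T := insert a (A ∩ vertexBoundary Γ A)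
  have hTA : T ⊆ A := Set.insert_subset ha Set.inter_subset_left
  refine ⟨comp '' T, ((hA.inter_of_right A).insert a).image comp, ?_, ?_⟩
  · rintro _ ⟨x, hx, rfl⟩
    exact hcomp x (hTA hx)
  by_contra hcover
  obtain ⟨x, ⟨hxA, hxT⟩, y, hxy, hxyR⟩ := exists_mem_vertexBoundary hΓ (A := A \ ⋃₀ (comp '' T))
    (Set.sdiff_nonempty.2 hcover) ⟨a, fun h => h.2 ⟨_, ⟨a, .inl rfl, rfl⟩, hmem a ha⟩⟩
  have hyR : y ∉ A \ ⋃₀ (comp '' T) := by tauto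
  by_cases hyA : y ∈ A
  · obtain ⟨_, ⟨t, ht, rfl⟩, hyt⟩ := not_not.1 fun h => hyR ⟨hyA, h⟩
    exact hxT ⟨_, ⟨t, ht, rfl⟩, (hcomp t (hTA ht)).mem_of_adj hyt hxA hxy.symm⟩
  · exact hxT ⟨_, ⟨x, .inr ⟨hxA, mem_vertexBoundary_left hxy hxA hyA⟩, rfl⟩, hmem x hxA⟩

/-- `Γ` has at least three ends: three disjoint infinite vertex sets have finite boundary. -/
def HasThreeEnds (Γ : SimpleGraph V) : Prop :=
  ∃ A : Fin 3 → Set V, (∀ i, (A i).Infinite) ∧ (∀ i, (vertexBoundary Γ (A i)).Finite) ∧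
    Pairwise (Function.onFun Disjoint A)

/-- `C` is an infinite set with finite boundary carrying exactly one end of `Γ`: a finite boundary
never splits it into two infinite parts. -/
structure IsOneEnded (Γ : SimpleGraph V) (C : Set V) : Prop where
  infinite : C.Infinite
  finite_vertexBoundary : (vertexBoundary Γ C).Finite
  finite_or_finite_diff : ∀ B ⊆ C, (vertexBoundary Γ B).Finite → B.Finite ∨ (C \ B).Finite

theorem IsOneEnded.of_finite_diff [Γ.LocallyFinite] (hC : IsOneEnded Γ C) (hDC : D ⊆ C)
    (hD : (C \ D).Finite) : IsOneEnded Γ D where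
  infinite hfin := hC.infinite ((hfin.union hD).subset fun x hx => by by_cases x ∈ D <;> simp_all)
  finite_vertexBoundary := by
    rw [← Set.sdiff_sdiff_cancel_left hDC]
    exact (hC.finite_vertexBoundary.union (finite_vertexBoundary_of_finite hD)).subset
      (vertexBoundary_diff_subset Γ _ _)
  finite_or_finite_diff B hB hfin := (hC.finite_or_finite_diff B (hB.trans hDC) hfin).imp_right
    fun h => h.subset (Set.sdiff_subset_sdiff_left hDC)

theorem IsOneEnded.exists_isComponent [Γ.LocallyFinite] (hΓ : Γ.Preconnected)
    (hC : IsOneEnded Γ C) (hF : F.Finite) : ∃ D, IsComponent Γ (C \ F) D ∧ (C \ D).Finite := by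
  have hbd : (vertexBoundary Γ (C \ F)).Finite :=
    (hC.finite_vertexBoundary.union (finite_vertexBoundary_of_finite hF)).subset
      (vertexBoundary_diff_subset Γ C F)
  obtain ⟨𝓑, h𝓑, hcomp, hcover⟩ := exists_finite_isComponent_cover hΓ hbd
  obtain ⟨D, hD, hDinf⟩ : ∃ D ∈ 𝓑, D.Infinite := by
    by_contra! hfin
    exact hC.infinite.sdiff hF ((h𝓑.sUnion hfin).subset hcover)
  exact ⟨D, hcomp D hD, (hC.finite_or_finite_diff D ((hcomp D hD).subset.trans Set.sdiff_subset)
    (hbd.subset (hcomp D hD).vertexBoundary_subset)).resolve_left hDinf⟩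

end Ends

section Sequences

variable {α : Type*}

theorem exists_seq_of_forall_exists_append {Q : List α → Prop} {C : Set α} (hC : C.Countable)
    (hCne : C.Nonempty) {P₀ : List α} (hP₀ : Q P₀)
    (hQ : ∀ P, Q P → ∀ x ∈ C, ∃ L ≠ [], Q (P ++ L) ∧ x ∈ P ++ L) :
    ∃ f : ℕ → α, (∀ n, ∃ m ≥ n, Q ((List.range m).map f)) ∧ C ⊆ Set.range f := by
  obtain ⟨c, rfl⟩ := hC.exists_eq_range hCne
  choose! ext hne hext hmem using hQ
  let P : ℕ → List α := fun n => n.rec P₀ fun n P => P ++ ext P (c n)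
  have hP (n) : Q (P n) := by
    induction n with
    | zero => exact hP₀
    | succ n ih => exact hext _ ih _ ⟨n, rfl⟩
  have hprefix {m n : ℕ} (hmn : m ≤ n) : P m <+: P n := by
    induction n, hmn using Nat.le_induction with
    | base => exact List.prefix_rfl
    | succ n _ ih => exact ih.trans (List.prefix_append _ _)
  have hlen (n) : n ≤ (P n).length := by
    induction n with
    | zero => exact Nat.zero_le _
    | succ n ih =>
      have hpos := List.length_pos_iff.2 (hne _ (hP n) (c n) ⟨n, rfl⟩)
      rw [show P (n + 1) = P n ++ ext (P n) (c n) from rfl, List.length_append]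
      omega
  let f : ℕ → α := fun i => (P (i + 1))[i]'(hlen (i + 1))
  have hf (n) : (List.range (P n).length).map f = P n := by
    refine List.ext_getElem (by simp) fun i _ hi => ?_
    simp only [List.getElem_map, List.getElem_range, f]
    obtain h | h := le_total (i + 1) n
    · exact (hprefix h).getElem _
    · exact ((hprefix h).getElem hi).symm
  refine ⟨f, fun n => ⟨_, hlen n, (hf n).symm ▸ hP n⟩, ?_⟩
  rintro _ ⟨n, rfl⟩
  have hn : c n ∈ P (n + 1) := hmem _ (hP n) _ ⟨n, rfl⟩
  rw [← hf (n + 1)] at hn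
  obtain ⟨i, -, hi⟩ := List.mem_map.1 hn
  exact ⟨i, hi⟩

theorem exists_injective_seq_of_forall_exists_append {Q : List α → Prop} {C : Set α}
    {r : α → α → Prop} (hC : C.Countable) (hCne : C.Nonempty) {P₀ : List α} (hP₀ : Q P₀)
    (hQ : ∀ P, Q P → ∀ x ∈ C, ∃ L ≠ [], Q (P ++ L) ∧ x ∈ P ++ L)
    (hnodup : ∀ P, Q P → P.Nodup) (hmem : ∀ P, Q P → ∀ x ∈ P, x ∈ C)
    (hchain : ∀ P, Q P → P.IsChain r) :
    ∃ f : ℕ → α, f.Injective ∧ Set.range f = C ∧ ∀ n, r (f n) (f (n + 1)) := by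
  obtain ⟨f, hf, hCf⟩ := exists_seq_of_forall_exists_append hC hCne hP₀ hQ
  refine ⟨f, fun i j hij => ?_, hCf.antisymm' ?_, fun n => ?_⟩
  · obtain ⟨m, hm, hQm⟩ := hf (max i j + 1)
    exact List.inj_on_of_nodup_map (hnodup _ hQm) (List.mem_range.2 (by omega))
      (List.mem_range.2 (by omega)) hij
  · rintro _ ⟨i, rfl⟩
    obtain ⟨m, hm, hQm⟩ := hf (i + 1)
    exact hmem _ hQm _ (List.mem_map_of_mem (List.mem_range.2 hm))
  · obtain ⟨m, hm, hQm⟩ := hf (n + 2)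
    have hn := List.isChain_iff_getElem.1 (hchain _ hQm) n
      (by rw [List.length_map, List.length_range]; omega)
    simpa only [List.getElem_map, List.getElem_range] using hn

end Sequences

section Rays

variable {V : Type*} {Γ : SimpleGraph V} {C E : Set V}

theorem IsOneEnded.exists_finite_preconnected [Γ.LocallyFinite] (hΓ : Γ.Preconnected)
    (hE : IsOneEnded Γ E) (hconn : (Γ.induce E).Preconnected) {a x : V} (ha : a ∈ E) (hx : x ∈ E) :
    ∃ N ⊆ E, N.Finite ∧ a ∈ N ∧ x ∈ N ∧ (Γ.induce N).Preconnected ∧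
      (Γ.induce (E \ N)).Preconnected ∧ ∃ b ∈ N, ∃ c ∈ E \ N, Γ.Adj b c := by
  obtain ⟨W, hWE, hW, haW, hxW, hWconn⟩ := exists_finite_connected_subset hconn ha hx
  obtain ⟨D, hD, hDfin⟩ := hE.exists_isComponent hΓ hW
  have hDE : D ⊆ E := hD.subset.trans Set.sdiff_subset
  have hWN : W ⊆ E \ D := fun w hw => ⟨hWE hw, fun hwD => (hD.subset hwD).2 hw⟩
  obtain ⟨c, hc, b, hb, -, hcb⟩ := hD.exists_adj hconn ⟨a, ha, haW⟩
  refine ⟨E \ D, Set.sdiff_subset, hDfin, hWN haW, hWN hxW, hD.preconnected_diff hconn hWE hWconn,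
    ?_, b, hWN hb, c, ?_, hcb.symm⟩
  all_goals rw [Set.sdiff_sdiff_cancel_left hDE]
  exacts [hD.connected.preconnected, hc]

/-- `P` is a Hamiltonian path of the finite set `N ⊆ C` in the `k`-th power of `Γ` which can be
continued inside the connected remainder `C \ N`. -/
structure IsExtendablePath (Γ : SimpleGraph V) (k : ℕ∞) (C N : Set V) (P : List V) : Prop where
  isPowerPath : IsPowerPath Γ k N P
  subset : N ⊆ C
  preconnected_diff : (Γ.induce (C \ N)).Preconnected
  exists_next : ∃ a ∈ C \ N, ∀ z ∈ P.getLast?, Γ.edist z a ≤ k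

theorem IsExtendablePath.exists_append [Γ.LocallyFinite] (hΓ : Γ.Preconnected)
    (hC : IsOneEnded Γ C) {k : ℕ∞} (hk : 3 ≤ k) {N : Set V} {P : List V}
    (hP : IsExtendablePath Γ k C N P) {x : V} (hx : x ∈ C) :
    ∃ M L, L ≠ [] ∧ IsExtendablePath Γ k C (N ∪ M) (P ++ L) ∧ x ∈ P ++ L := by
  have hN : N.Finite := (List.finite_toSet P).subset fun v hv => (hP.isPowerPath.mem_iff v).2 hv
  have hE : IsOneEnded Γ (C \ N) := hC.of_finite_diff Set.sdiff_subset
    (by rwa [Set.sdiff_sdiff_cancel_left hP.subset])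
  obtain ⟨a, ha, hPa⟩ := hP.exists_next
  obtain ⟨y, hy, hxy⟩ : ∃ y ∈ C \ N, x ∈ N ∨ x = y := by
    by_cases hxN : x ∈ N
    · exact ⟨a, ha, .inl hxN⟩
    · exact ⟨x, ⟨hx, hxN⟩, .inr rfl⟩
  obtain ⟨M, hME, hM, haM, hyM, hMconn, hdiff, b, hb, c, hc, hbc⟩ :=
    hE.exists_finite_preconnected hΓ hP.preconnected_diff ha hy
  obtain ⟨L, z, hL, hLa, hLz, hzb⟩ := exists_isPowerPath_three hM hMconn haM hb
  have hzc : Γ.edist z c ≤ k := calc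
    Γ.edist z c ≤ Γ.edist z b + Γ.edist b c := Γ.edist_triangle
    _ ≤ 1 + 1 := add_le_add hzb (SimpleGraph.edist_le_one_iff_adj_or_eq.2 (.inl hbc))
    _ ≤ 3 := by norm_num
    _ ≤ k := hk
  have hPL : IsPowerPath Γ k (N ∪ M) (P ++ L) :=
    hP.isPowerPath.append (hL.mono hk) (Set.disjoint_sdiff_right.mono_right hME) (by simpa [hLa])
  refine ⟨M, L, List.ne_nil_of_mem (List.mem_of_head? hLa),
    ⟨hPL, Set.union_subset hP.subset (hME.trans Set.sdiff_subset), ?_, c, ?_, by simpa [hLz]⟩,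
    (hPL.mem_iff x).2 (hxy.imp_right fun h : x = y => h ▸ hyM)⟩
  all_goals rwa [← Set.sdiff_sdiff]

theorem IsOneEnded.exists_ray [Γ.LocallyFinite] [Countable V] (hΓ : Γ.Connected)
    (hC : IsOneEnded Γ C) : ∃ f : ℕ → V, f.Injective ∧ Set.range f = C ∧
      ∃ k : ℕ, ∀ n, Γ.dist (f n) (f (n + 1)) ≤ k := by
  obtain ⟨D, hD, hfin⟩ := hC.exists_isComponent hΓ.preconnected Set.finite_empty
  rw [Set.sdiff_empty] at hD
  obtain ⟨a⟩ := hD.connected.nonempty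
  obtain ⟨k, hk⟩ := (((hfin.insert a.1).prod (hfin.insert a.1)).image
    fun p => Γ.dist p.1 p.2).bddAbove
  replace hk {x y : V} (hx : x ∈ insert a.1 (C \ D)) (hy : y ∈ insert a.1 (C \ D)) :
      Γ.edist x y ≤ (max k 3 : ℕ) := by
    rw [← (hΓ x y).coe_dist_eq_edist, Nat.cast_le]
    exact (hk ⟨(x, y), ⟨hx, hy⟩, rfl⟩).trans (le_max_left _ _)
  have hmem {v} : v ∈ hfin.toFinset.toList ↔ v ∈ C \ D := by simp
  have hinit : IsExtendablePath Γ (max k 3 : ℕ) C (C \ D) hfin.toFinset.toList := by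
    refine ⟨⟨Finset.nodup_toList _, fun v => hmem, ?_⟩, Set.sdiff_subset, ?_, a, ?_, fun z hz => ?_⟩
    · exact (List.pairwise_of_forall_mem_list fun x hx y hy =>
        hk (.inr (hmem.1 hx)) (.inr (hmem.1 hy))).isChain
    · rw [Set.sdiff_sdiff_cancel_left hD.subset]
      exact hD.connected.preconnected
    · rw [Set.sdiff_sdiff_cancel_left hD.subset]
      exact a.2
    · exact hk (.inr (hmem.1 (List.mem_of_getLast? hz))) (.inl rfl)
  obtain ⟨f, hf, hfC, hfk⟩ := exists_injective_seq_of_forall_exists_append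
    (Q := fun P => ∃ N, IsExtendablePath Γ (max k 3 : ℕ) C N P)
    (r := fun x y => Γ.edist x y ≤ (max k 3 : ℕ)) C.to_countable hC.infinite.nonempty ⟨_, hinit⟩
    (fun P ⟨N, hP⟩ x hx => by
      obtain ⟨M, L, hL, hPL, hxL⟩ := hP.exists_append hΓ.preconnected hC (by simp) hx
      exact ⟨L, hL, ⟨_, hPL⟩, hxL⟩)
    (fun P ⟨N, hP⟩ => hP.isPowerPath.nodup)
    (fun P ⟨N, hP⟩ x hx => hP.subset ((hP.isPowerPath.mem_iff x).1 hx))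
    (fun P ⟨N, hP⟩ => hP.isPowerPath.isChain)
  exact ⟨f, hf, hfC, max k 3, fun n => by exact_mod_cast (hΓ _ _).coe_dist_eq_edist ▸ hfk n⟩

end Rays

section ClosedBalls

variable {V : Type*} {Γ : SimpleGraph V}

/-- The closed ball of radius `r` around `v` in the path metric of `Γ`. -/
def closedBall (Γ : SimpleGraph V) (v : V) (r : ℕ) : Set V :=
  {x | Γ.dist v x ≤ r}

theorem exists_adj_dist_add_one_eq (hΓ : Γ.Connected) {v x : V} (h : v ≠ x) :
    ∃ y, Γ.Adj y x ∧ Γ.dist v y + 1 = Γ.dist v x := by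
  obtain ⟨p, hp⟩ := hΓ.exists_walk_length_eq_dist x v
  cases p with
  | nil => exact (h rfl).elim
  | @cons _ y _ hxy p =>
    have hle : Γ.dist v y ≤ p.length := Γ.dist_comm.trans_le (SimpleGraph.dist_le p)
    have htri : Γ.dist v x ≤ Γ.dist v y + Γ.dist y x := hΓ.dist_triangle
    have hyx : Γ.dist y x = 1 := SimpleGraph.dist_eq_one_iff_adj.2 hxy.symm
    rw [SimpleGraph.Walk.length_cons, Γ.dist_comm] at hp
    exact ⟨y, hxy.symm, by lia⟩

theorem finite_closedBall [Γ.LocallyFinite] (hΓ : Γ.Connected) (v : V) (r : ℕ) :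
    (closedBall Γ v r).Finite := by
  induction r with
  | zero => exact (Set.finite_singleton v).subset fun x hx =>
      (hΓ.dist_eq_zero_iff.1 (Nat.le_zero.1 hx)).symm
  | succ r ih =>
    refine ((Set.finite_singleton v).union
      (ih.biUnion fun x _ => (Γ.neighborSet x).toFinite)).subset fun x hx => ?_
    by_cases hvx : v = x
    · exact .inl hvx.symm
    · obtain ⟨y, hyx, hy⟩ := exists_adj_dist_add_one_eq hΓ hvx
      exact .inr (Set.mem_biUnion (Nat.le_of_succ_le_succ (hy.trans_le hx)) hyx)

theorem exists_subset_closedBall {s : Set V} (hs : s.Finite) (v : V) :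
    ∃ r, s ⊆ closedBall Γ v r := by
  obtain ⟨r, hr⟩ := (hs.image (Γ.dist v)).bddAbove
  exact ⟨r, fun x hx => hr ⟨x, hx, rfl⟩⟩

theorem preconnected_closedBall (hΓ : Γ.Connected) (v : V) (r : ℕ) :
    (Γ.induce (closedBall Γ v r)).Preconnected := by
  have hv : v ∈ closedBall Γ v r := by simp [closedBall]
  have hreach (n : ℕ) : ∀ x (hx : x ∈ closedBall Γ v r), Γ.dist v x = n →
      (Γ.induce (closedBall Γ v r)).Reachable ⟨v, hv⟩ ⟨x, hx⟩ := by
    induction n with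
    | zero =>
      intro x hx hn
      obtain rfl := hΓ.dist_eq_zero_iff.1 hn
      rfl
    | succ n ih =>
      intro x hx hn
      obtain ⟨y, hyx, hy⟩ := exists_adj_dist_add_one_eq hΓ
        (fun h => by simp [h] at hn : v ≠ x)
      have hyr : y ∈ closedBall Γ v r := (Nat.le_succ _).trans (hy.trans_le hx)
      exact (ih y hyr (Nat.succ_injective (hy.trans hn))).trans
        (SimpleGraph.Adj.reachable (G := Γ.induce (closedBall Γ v r)) hyx)
  exact fun x y => (hreach _ x x.2 rfl).symm.trans (hreach _ y y.2 rfl)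

theorem countable_of_connected_of_locallyFinite [Γ.LocallyFinite] (hΓ : Γ.Connected) :
    Countable V := by
  obtain ⟨v⟩ := hΓ.nonempty
  refine Set.countable_univ_iff.1 ((Set.countable_iUnion fun r =>
    (finite_closedBall hΓ v r).countable).mono fun x _ => ?_)
  exact Set.mem_iUnion.2 ⟨Γ.dist v x, (le_rfl : Γ.dist v x ≤ _)⟩

end ClosedBalls

section FewEnds

variable {V : Type*} {Γ : SimpleGraph V} {C : Set V}

theorem isOneEnded_of_not_hasThreeEnds (h : ¬HasThreeEnds Γ) (hC : C.Infinite)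
    (hC' : Cᶜ.Infinite) (hbd : (vertexBoundary Γ C).Finite) : IsOneEnded Γ C := by
  refine ⟨hC, hbd, fun B hBC hB => ?_⟩
  by_contra! hinf
  refine h ⟨![B, C \ B, Cᶜ], ?_, ?_, ?_⟩
  · simpa [Fin.forall_fin_succ] using ⟨hinf.1, hinf.2, hC'⟩
  · have hdiff := (hbd.union hB).subset (vertexBoundary_diff_subset Γ C B)
    simpa [Fin.forall_fin_succ, vertexBoundary_compl] using ⟨hB, hdiff, hbd⟩
  · rw [pairwise_disjoint_on]
    have h₁ : Disjoint B (C \ B) := Set.disjoint_sdiff_right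
    have h₂ : Disjoint B Cᶜ := Set.disjoint_compl_right_iff_subset.2 hBC
    have h₃ : Disjoint (C \ B) Cᶜ := Set.disjoint_compl_right_iff_subset.2 Set.sdiff_subset
    intro i j hij
    fin_cases i <;> fin_cases j <;> simp_all

theorem exists_int_equiv_of_rays (Γ : SimpleGraph V) {f g : ℕ → V}
    (hfg : (Sum.elim f g).Bijective) {k : ℕ} (hf : ∀ n, Γ.dist (f n) (f (n + 1)) ≤ k)
    (hg : ∀ n, Γ.dist (g n) (g (n + 1)) ≤ k) :
    ∃ (e : ℤ ≃ V) (l : ℕ), ∀ z, Γ.dist (e z) (e (z + 1)) ≤ l := by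
  refine ⟨Equiv.intEquivNatSumNat.trans (.ofBijective _ hfg), max k (Γ.dist (g 0) (f 0)), ?_⟩
  rintro (n | _ | n)
  · exact (hf n).trans (le_max_left _ _)
  · exact le_max_right _ _
  · exact (Γ.dist_comm.trans_le (hg n)).trans (le_max_left _ _)

theorem exists_int_equiv_of_not_hasThreeEnds [Γ.LocallyFinite] [Infinite V] (hΓ : Γ.Connected)
    (h : ¬HasThreeEnds Γ) : ∃ (e : ℤ ≃ V) (k : ℕ), ∀ z, Γ.dist (e z) (e (z + 1)) ≤ k := by
  have := countable_of_connected_of_locallyFinite hΓ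
  by_cases hsplit : ∃ C : Set V, C.Infinite ∧ Cᶜ.Infinite ∧ (vertexBoundary Γ C).Finite
  · obtain ⟨C, hC, hC', hbd⟩ := hsplit
    obtain ⟨f, hf, hfC, k, hfk⟩ := (isOneEnded_of_not_hasThreeEnds h hC hC' hbd).exists_ray hΓ
    obtain ⟨g, hg, hgC, l, hgl⟩ := (isOneEnded_of_not_hasThreeEnds h hC' (by rwa [compl_compl])
      (by rwa [vertexBoundary_compl])).exists_ray hΓ
    refine exists_int_equiv_of_rays Γ ⟨hf.sumElim hg fun m n hmn => ?_, ?_⟩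
      (fun n => (hfk n).trans (le_max_left k l)) fun n => (hgl n).trans (le_max_right k l)
    · exact (hgC ▸ Set.mem_range_self n : g n ∈ Cᶜ) (hmn ▸ hfC ▸ Set.mem_range_self m)
    · rw [← Set.range_eq_univ, Set.Sum.elim_range, hfC, hgC, Set.union_compl_self]
  · have huniv : IsOneEnded Γ Set.univ := by
      refine ⟨Set.infinite_univ, by simp [vertexBoundary], fun B _ hB => ?_⟩
      by_contra! hinf
      exact hsplit ⟨B, hinf.1, by simpa [Set.compl_eq_univ_sdiff] using hinf.2, hB⟩
    obtain ⟨f, hf, hf', k, hfk⟩ := huniv.exists_ray hΓ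
    have hbij : (Sum.elim (fun n => f (2 * n)) fun n => f (2 * n + 1)).Bijective := by
      have hcomp := Function.Bijective.comp (g := f) ⟨hf, Set.range_eq_univ.1 hf'⟩
        Equiv.natSumNatEquivNat.bijective
      rwa [Equiv.natSumNatEquivNat_apply, Sum.comp_elim] at hcomp
    have hf₂ (n) : Γ.dist (f n) (f (n + 2)) ≤ k + k :=
      hΓ.dist_triangle.trans (add_le_add (hfk n) (hfk (n + 1)))
    exact exists_int_equiv_of_rays Γ hbij (fun n => hf₂ (2 * n)) fun n => hf₂ (2 * n + 1)

end FewEnds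

section Cuts

variable {V : Type*} {Γ : SimpleGraph V} {A B B' K : Set V} {o b c v w : V} {R : ℕ}

theorem subset_or_disjoint_of_disjoint_vertexBoundary (hK : (Γ.induce K).Preconnected)
    (h : Disjoint K (vertexBoundary Γ B)) : K ⊆ B ∨ Disjoint K B := by
  by_contra! ⟨hsub, hdisj⟩
  obtain ⟨y, ⟨hyK, hyB⟩, z, ⟨-, hzB⟩, hyz⟩ := preconnected_induce_iff_exists_adj.1 hK B
    (Set.not_disjoint_iff_nonempty_inter.1 hdisj) (Set.sdiff_nonempty.2 hsub)
  exact h.notMem_of_mem_left hyK (mem_vertexBoundary_left hyz hyB hzB)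

theorem mem_or_mem_of_nonempty_inter (hΓ : Γ.Connected)
    (hB : vertexBoundary Γ B ⊆ closedBall Γ v R) (hB' : vertexBoundary Γ B' ⊆ closedBall Γ w R)
    (hvw : 2 * R < Γ.dist v w) (hne : (B ∩ B').Nonempty) : w ∈ B ∨ v ∈ B' := by
  have hv : v ∈ closedBall Γ v R := by simp [closedBall]
  have hw : w ∈ closedBall Γ w R := by simp [closedBall]
  have hdisj : Disjoint (closedBall Γ v R) (closedBall Γ w R) := by
    refine Set.disjoint_left.2 fun x (hvx : Γ.dist v x ≤ R) (hwx : Γ.dist w x ≤ R) => ?_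
    have htri : Γ.dist v w ≤ Γ.dist v x + Γ.dist x w := hΓ.dist_triangle
    rw [Γ.dist_comm (u := x)] at htri
    lia
  by_contra! ⟨hwB, hvB'⟩
  have hKB' := (subset_or_disjoint_of_disjoint_vertexBoundary (preconnected_closedBall hΓ v R)
    (hdisj.mono_right hB')).resolve_left fun h => hvB' (h hv)
  have hK'B := (subset_or_disjoint_of_disjoint_vertexBoundary (preconnected_closedBall hΓ w R)
    (hdisj.symm.mono_right hB)).resolve_left fun h => hwB (h hw)
  obtain ⟨x, ⟨hxB, hxB'⟩, hx⟩ :=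
    exists_mem_vertexBoundary hΓ.preconnected hne ⟨v, fun h => hvB' h.2⟩
  rcases vertexBoundary_inter_subset Γ B B' hx with hx | hx
  · exact hKB'.notMem_of_mem_left (hB hx) hxB'
  · exact hK'B.notMem_of_mem_left (hB' hx) hxB

theorem exists_mem_vertexBoundary_dist_add_dist_eq (hΓ : Γ.Connected) (ho : o ∉ B) (hc : c ∈ B) :
    ∃ z ∈ vertexBoundary Γ B, Γ.dist o z + Γ.dist z c = Γ.dist o c := by
  obtain ⟨n, hn⟩ : ∃ n, Γ.dist o c = n := ⟨_, rfl⟩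
  induction n generalizing c with
  | zero => exact (ho (hΓ.dist_eq_zero_iff.1 hn ▸ hc)).elim
  | succ n ih =>
    obtain ⟨y, hyc, hy⟩ := exists_adj_dist_add_one_eq hΓ (fun h => ho (h ▸ hc) : o ≠ c)
    by_cases hyB : y ∈ B
    · obtain ⟨z, hz, hzy⟩ := ih hyB (by lia)
      have htri : Γ.dist z c ≤ Γ.dist z y + Γ.dist y c := hΓ.dist_triangle
      have htri' : Γ.dist o c ≤ Γ.dist o z + Γ.dist z c := hΓ.dist_triangle
      rw [SimpleGraph.dist_eq_one_iff_adj.2 hyc] at htri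
      exact ⟨z, hz, by lia⟩
    · exact ⟨c, mem_vertexBoundary_left hyc.symm hc hyB, by simp⟩

theorem dist_add_dist_le_of_vertexBoundary_subset (hΓ : Γ.Connected)
    (hB : vertexBoundary Γ B ⊆ closedBall Γ b R) (ho : o ∉ B) (hc : c ∈ B) :
    Γ.dist o b + Γ.dist b c ≤ Γ.dist o c + 2 * R := by
  obtain ⟨z, hz, hoz⟩ := exists_mem_vertexBoundary_dist_add_dist_eq hΓ ho hc
  have hbz : Γ.dist b z ≤ R := hB hz
  have hob : Γ.dist o b ≤ Γ.dist o z + Γ.dist z b := hΓ.dist_triangle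
  have hbc : Γ.dist b c ≤ Γ.dist b z + Γ.dist z c := hΓ.dist_triangle
  rw [Γ.dist_comm (u := z)] at hob
  lia

theorem exists_closedBall_subset [Γ.LocallyFinite] (hΓ : Γ.Connected) (hA : A.Infinite)
    (hbd : (vertexBoundary Γ A).Finite) (r : ℕ) : ∃ y, closedBall Γ y r ⊆ A := by
  obtain ⟨y, hyA, hy⟩ := hA.exists_notMem_finite
    (hbd.biUnion fun z _ => finite_closedBall hΓ z r)
  refine ⟨y, fun x (hx : Γ.dist y x ≤ r) => by_contra fun hxA => hy ?_⟩
  obtain ⟨z, hz, hxz⟩ := exists_mem_vertexBoundary_dist_add_dist_eq hΓ hxA hyA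
  rw [Γ.dist_comm] at hx
  exact Set.mem_biUnion hz (show Γ.dist z y ≤ r by lia)

end Cuts

section Branching

variable {V ι κ : Type*} {Γ : SimpleGraph V}

/-- Every vertex of `Γ` can be moved to every other one by an automorphism of `Γ`. -/
def IsVertexTransitive (Γ : SimpleGraph V) : Prop :=
  ∀ v w : V, ∃ φ : Γ ≃g Γ, φ v = w

theorem dist_iso_apply (hΓ : Γ.Connected) (φ : Γ ≃g Γ) (x y : V) :
    Γ.dist (φ x) (φ y) = Γ.dist x y := by
  have hle (ψ : Γ ≃g Γ) (u v : V) : Γ.dist (ψ u) (ψ v) ≤ Γ.dist u v := by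
    obtain ⟨p, hp⟩ := hΓ.exists_walk_length_eq_dist u v
    simpa [hp] using SimpleGraph.dist_le (p.map ψ.toHom)
  exact (hle φ x y).antisymm (by simpa using hle φ.symm (φ x) (φ y))

theorem mem_closedBall_iso_apply (hΓ : Γ.Connected) (φ : Γ ≃g Γ) {v x : V} {r : ℕ} :
    x ∈ closedBall Γ (φ v) r ↔ φ.symm x ∈ closedBall Γ v r := by
  change Γ.dist (φ v) x ≤ r ↔ Γ.dist v (φ.symm x) ≤ r
  rw [← dist_iso_apply hΓ φ v, φ.apply_symm_apply]

/-- The sets `A i` are disjoint branches of `Γ` at `v`: they avoid `v`, their boundaries lie within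
distance `R` of `v`, and each of them contains a ball of radius `2 * R` centred within distance `M`
of `v`. -/
structure IsBranching (Γ : SimpleGraph V) (R M : ℕ) (v : V) (A : ι → Set V) : Prop where
  pairwise_disjoint : Pairwise (Function.onFun Disjoint A)
  notMem : ∀ i, v ∉ A i
  vertexBoundary_subset : ∀ i, vertexBoundary Γ (A i) ⊆ closedBall Γ v R
  exists_closedBall_subset : ∀ i, ∃ y ∈ closedBall Γ v M, closedBall Γ y (2 * R) ⊆ A i

variable {R M : ℕ} {v : V}

theorem HasThreeEnds.exists_isBranching [Γ.LocallyFinite] (hΓ : Γ.Connected) (h : HasThreeEnds Γ)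
    (v : V) : ∃ (R M : ℕ) (A : Fin 3 → Set V), IsBranching Γ R M v A := by
  obtain ⟨A, hA, hbd, hdisj⟩ := h
  have hbd' (i : Fin 3) : (vertexBoundary Γ (A i \ {v})).Finite :=
    ((hbd i).union (finite_vertexBoundary_of_finite (Set.finite_singleton v))).subset
      (vertexBoundary_diff_subset Γ _ _)
  obtain ⟨R, hR⟩ := exists_subset_closedBall (Γ := Γ) (Set.finite_iUnion hbd') v
  choose y hy using fun i =>
    exists_closedBall_subset hΓ ((hA i).sdiff (Set.finite_singleton v)) (hbd' i) (2 * R)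
  obtain ⟨M, hM⟩ := exists_subset_closedBall (Γ := Γ) (Set.finite_range y) v
  exact ⟨R, M, fun i => A i \ {v},
    fun i j hij => (hdisj hij).mono Set.sdiff_subset Set.sdiff_subset, fun i hv => hv.2 rfl,
    fun i => (Set.subset_iUnion _ i).trans hR, fun i => ⟨y i, hM ⟨i, rfl⟩, hy i⟩⟩

theorem IsBranching.preimage_symm {A : ι → Set V} (hΓ : Γ.Connected)
    (hA : IsBranching Γ R M v A) (φ : Γ ≃g Γ) :
    IsBranching Γ R M (φ v) fun i => φ.symm ⁻¹' A i where
  pairwise_disjoint i j hij := (hA.pairwise_disjoint hij).preimage _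
  notMem i hv := hA.notMem i (by simpa using hv)
  vertexBoundary_subset i x := by
    rintro ⟨y, hxy, h⟩
    exact (mem_closedBall_iso_apply hΓ φ).2
      (hA.vertexBoundary_subset i ⟨φ.symm y, φ.symm.map_adj_iff.2 hxy, h⟩)
  exists_closedBall_subset i := by
    obtain ⟨y, hy, hyA⟩ := hA.exists_closedBall_subset i
    exact ⟨φ y, (dist_iso_apply hΓ φ v y).trans_le hy,
      fun x hx => hyA ((mem_closedBall_iso_apply hΓ φ).1 hx)⟩

theorem IsBranching.comp {A : ι → Set V} (hA : IsBranching Γ R M v A) {f : κ → ι}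
    (hf : f.Injective) : IsBranching Γ R M v (A ∘ f) where
  pairwise_disjoint _ _ hij := hA.pairwise_disjoint (hf.ne hij)
  notMem i := hA.notMem (f i)
  vertexBoundary_subset i := hA.vertexBoundary_subset (f i)
  exists_closedBall_subset i := hA.exists_closedBall_subset (f i)

theorem IsBranching.exists_forall_notMem {n : ℕ} {A : Fin (n + 1) → Set V}
    (hA : IsBranching Γ R M v A) (o : V) :
    ∃ B : Fin n → Set V, IsBranching Γ R M v B ∧ ∀ i, o ∉ B i := by
  obtain ⟨j, hj⟩ : ∃ j, ∀ i, i ≠ j → o ∉ A i := by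
    by_cases h : ∃ j, o ∈ A j
    · obtain ⟨j, hj⟩ := h
      exact ⟨j, fun i hij => (hA.pairwise_disjoint hij.symm).notMem_of_mem_left hj⟩
    · exact ⟨0, fun i _ hi => h ⟨i, hi⟩⟩
  exact ⟨A ∘ j.succAbove, hA.comp Fin.succAbove_right_injective,
    fun i => hj _ (Fin.succAbove_ne j i)⟩

theorem HasThreeEnds.exists_forall_isBranching [Γ.LocallyFinite] (h : HasThreeEnds Γ)
    (hΓ : Γ.Connected) (htrans : IsVertexTransitive Γ) (o : V) :
    ∃ (R M : ℕ) (A : V → Fin 2 → Set V), ∀ v, IsBranching Γ R M v (A v) ∧ ∀ i, o ∉ A v i := by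
  obtain ⟨R, M, A, hA⟩ := h.exists_isBranching hΓ o
  choose B hB using fun v => show ∃ B : Fin 2 → Set V, IsBranching Γ R M v B ∧ ∀ i, o ∉ B i by
    obtain ⟨φ, rfl⟩ := htrans o v
    exact (hA.preimage_symm hΓ φ).exists_forall_notMem o
  exact ⟨R, M, B, hB⟩

end Branching

section OutwardMaps

variable {V ι : Type*} {Γ : SimpleGraph V} {R M : ℕ} {o v : V}

open SetRel in
theorem exists_isSeparated_isCover {X : Type*} (U : SetRel X X) [U.IsRefl] [U.IsSymm] :
    ∃ Z : Set X, IsSeparated U Z ∧ IsCover U Set.univ Z := by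
  obtain ⟨Z, hZ⟩ := zorn_subset {Z : Set X | IsSeparated U Z} fun c hc hchain =>
    ⟨⋃₀ c, (Set.pairwise_sUnion hchain.directedOn).2 hc, fun _ => Set.subset_sUnion_of_mem⟩
  exact ⟨Z, hZ.prop, .of_maximal_isSeparated (by simpa using hZ)⟩

/-- Passing from `x` to `y` increases the distance to the root `o` by at least `g` and displaces by
at most `D`. -/
def MovesOutward (Γ : SimpleGraph V) (o : V) (g D : ℕ) (x y : V) : Prop :=
  Γ.dist o x + g ≤ Γ.dist o y ∧ Γ.dist x y ≤ D

theorem IsBranching.exists_movesOutward {A : ι → Set V} {Z : Set V} (hA : IsBranching Γ R M v A)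
    (hΓ : Γ.Connected) (hZ : ∀ x, ∃ z ∈ Z, Γ.dist x z ≤ 2 * R)
    (hv : ∀ z ∈ Z, v ≠ z → 2 * R < Γ.dist v z) (i : ι) (ho : o ∉ A i) :
    ∃ c ∈ Z, c ∈ A i ∧ (∀ z ∈ Z, z ∈ A i → Γ.dist o c ≤ Γ.dist o z) ∧
      MovesOutward Γ o 1 (M + 4 * R) v c := by
  obtain ⟨y, hvy, hyA⟩ := hA.exists_closedBall_subset i
  obtain ⟨z, hz, hyz⟩ := hZ y
  obtain ⟨c, ⟨hcZ, hcA⟩, hmin⟩ := exists_minimalFor_of_wellFoundedLT (fun c => c ∈ Z ∧ c ∈ A i)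
    (Γ.dist o) ⟨z, hz, hyA hyz⟩
  have hle (z) (hz : z ∈ Z) (hzA : z ∈ A i) : Γ.dist o c ≤ Γ.dist o z :=
    (le_total _ _).elim id fun h => hmin ⟨hz, hzA⟩ h
  refine ⟨c, hcZ, hcA, hle, ?_⟩
  have hcross := dist_add_dist_le_of_vertexBoundary_subset hΓ (hA.vertexBoundary_subset i) ho hcA
  have hvc := hv c hcZ fun h => hA.notMem i (h ▸ hcA)
  have hcz := hle z hz (hyA hyz)
  have hoz : Γ.dist o z ≤ Γ.dist o v + Γ.dist v z := hΓ.dist_triangle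
  have hvz : Γ.dist v z ≤ Γ.dist v y + Γ.dist y z := hΓ.dist_triangle
  have hvy : Γ.dist v y ≤ M := hvy
  exact ⟨by lia, by lia⟩

theorem exists_injective_movesOutward_of_isBranching (hΓ : Γ.Connected) {A : V → ι → Set V}
    (hA : ∀ v, IsBranching Γ R M v (A v)) (ho : ∀ v i, o ∉ A v i) {Z : Set V}
    (hsep : Z.Pairwise fun x y => 2 * R < Γ.dist x y) (hcov : ∀ x, ∃ z ∈ Z, Γ.dist x z ≤ 2 * R) :
    ∃ T : Z × ι → Z, T.Injective ∧ ∀ p, MovesOutward Γ o 1 (M + 4 * R) p.1 (T p) := by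
  choose T hTZ hTA hmin hT using fun p : Z × ι =>
    (hA p.1).exists_movesOutward hΓ hcov (fun z hz => hsep p.1.2 hz) p.2 (ho p.1 p.2)
  have hnotMem {p q : Z × ι} (hpq : T p = T q) : (q.1 : V) ∉ A p.1 p.2 := fun hq => by
    have hcross := dist_add_dist_le_of_vertexBoundary_subset hΓ
      ((hA q.1).vertexBoundary_subset q.2) (ho q.1 q.2) (hTA q)
    have hqT := hsep q.1.2 (hTZ q) fun h => (hA q.1).notMem q.2 (h ▸ hTA q)
    have hle := hmin p q.1 q.1.2 hq
    rw [hpq] at hle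
    lia
  refine ⟨fun p => ⟨T p, hTZ p⟩, fun p q hpq => ?_, hT⟩
  replace hpq : T p = T q := congrArg Subtype.val hpq
  have hvert : (p.1 : V) = q.1 := by
    by_contra hne
    rcases mem_or_mem_of_nonempty_inter hΓ ((hA p.1).vertexBoundary_subset p.2)
      ((hA q.1).vertexBoundary_subset q.2) (hsep p.1.2 q.1.2 hne)
      ⟨T p, hTA p, hpq ▸ hTA q⟩ with h | h
    · exact hnotMem hpq h
    · exact hnotMem hpq.symm h
  refine Prod.ext (Subtype.ext hvert) (by_contra fun hne => ?_)
  exact ((hA p.1).pairwise_disjoint hne).notMem_of_mem_left (hTA p)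
    (by rw [hpq, hvert]; exact hTA q)

theorem exists_injective_movesOutward_iterate {Z : Set V} (hΓ : Γ.Connected) {D : ℕ}
    {T : Z × ι → Z} (hT : T.Injective) (hmove : ∀ p, MovesOutward Γ o 1 D p.1 (T p)) (n : ℕ) :
    ∃ S : Z × (Fin n → ι) → Z, S.Injective ∧ ∀ p, MovesOutward Γ o n (n * D) p.1 (S p) := by
  induction n with
  | zero =>
    exact ⟨Prod.fst, fun p q hpq => Prod.ext hpq (Subsingleton.elim _ _),
      fun p => ⟨le_rfl, by simp⟩⟩
  | succ n ih =>
    obtain ⟨S, hS, hSmove⟩ := ih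
    refine ⟨fun p => T (S (p.1, Fin.tail p.2), p.2 0), fun p q hpq => ?_, fun p => ?_⟩
    · obtain ⟨htail, hhead⟩ := Prod.ext_iff.1 (hT hpq)
      obtain ⟨hz, htail⟩ := Prod.ext_iff.1 (hS htail)
      refine Prod.ext hz ?_
      rw [← Fin.cons_self_tail p.2, ← Fin.cons_self_tail q.2]
      exact congrArg₂ _ hhead htail
    · obtain ⟨hgain, hdist⟩ := hSmove (p.1, Fin.tail p.2)
      obtain ⟨hgain', hdist'⟩ := hmove (S (p.1, Fin.tail p.2), p.2 0)
      exact ⟨by dsimp only at *; lia, hΓ.dist_triangle.trans (by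
        rw [add_one_mul]; exact add_le_add hdist hdist')⟩

end OutwardMaps

section LabelledTree

variable {V Λ : Type*} {Γ : SimpleGraph V} {o : V}

theorem MovesOutward.mono {g g' D D' : ℕ} {x y : V} (h : MovesOutward Γ o g D x y) (hg : g' ≤ g)
    (hD : D ≤ D') : MovesOutward Γ o g' D' x y :=
  ⟨(Nat.add_le_add_left hg _).trans h.1, h.2.trans hD⟩

theorem IsVertexTransitive.exists_injective_dist_eq (h : IsVertexTransitive Γ)
    (hΓ : Γ.Connected) (o : V) :
    ∃ f : V → V → V, (∀ z, (f z).Injective) ∧ ∀ z v, Γ.dist o (f z v) = Γ.dist z v := by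
  choose φ hφ using h o
  refine ⟨fun z => (φ z).symm, fun z => (φ z).symm.injective, fun z v => ?_⟩
  rw [← dist_iso_apply hΓ (φ z), hφ, RelIso.apply_symm_apply]

theorem exists_embedding_fin_to_fin_two (β : Type*) [Finite β] (m : ℕ) :
    ∃ n ≥ m, Nonempty (β ↪ (Fin n → Fin 2)) := by
  cases nonempty_fintype β
  refine ⟨max m (Fintype.card β), le_max_left _ _, Function.Embedding.nonempty_of_card_le ?_⟩
  rw [Fintype.card_fun, Fintype.card_fin, Fintype.card_fin]
  exact (le_max_right _ _).trans Nat.lt_two_pow_self.le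

theorem exists_injOn_fin_prod_bool {s : Set V} (hs : s.Finite) :
    ∃ k ≥ 2, ∃ (c : V → Fin k × Bool) (z : Fin k × Bool), Set.InjOn c s ∧ ∀ v, c v ≠ z := by
  obtain ⟨f, hf⟩ := Set.countable_iff_exists_injOn.1 hs.countable
  obtain ⟨n, hn⟩ := (hs.image f).bddAbove
  have hlt {v : V} (hv : v ∈ s) : f v < n + 2 :=
    Nat.lt_add_right 1 (Nat.lt_succ_of_le (hn ⟨v, hv, rfl⟩))
  refine ⟨n + 2, Nat.le_add_left _ _, fun v => (Fin.ofNat (n + 2) (f v), true), (0, false),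
    fun v hv w hw hvw => hf hv hw ?_, by simp⟩
  simpa [Fin.ext_iff, Nat.mod_eq_of_lt, hlt hv, hlt hw] using hvw

theorem exists_bijOn_of_injOn_of_rel {X Y : Type*} {s : Set X} {t : Set Y} {f : X → Y} {g : Y → X}
    (hf : Set.InjOn f s) (hfst : Set.MapsTo f s t) (hg : Set.InjOn g t) (hgts : Set.MapsTo g t s)
    (r : X → Y → Prop) (hrf : ∀ x ∈ s, r x (f x)) (hrg : ∀ y ∈ t, r (g y) y) :
    ∃ h : X → Y, Set.BijOn h s t ∧ ∀ x ∈ s, r x (h x) := by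
  classical
  obtain ⟨e, ⟨he, he'⟩, her⟩ := Function.Embedding.schroeder_bernstein_of_rel
    (hfst.restrict_inj.2 hf) (hgts.restrict_inj.2 hg) (fun x y => r x y)
    (fun x => hrf x x.2) fun y => hrg y y.2
  let h (x : X) : Y := if hx : x ∈ s then e ⟨x, hx⟩ else f x
  have hh (x) (hx : x ∈ s) : h x = e ⟨x, hx⟩ := dif_pos hx
  refine ⟨h, ⟨fun x hx => ?_, fun x hx y hy hxy => ?_, fun y hy => ?_⟩, fun x hx => ?_⟩
  · exact hh x hx ▸ (e ⟨x, hx⟩).2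
  · rw [hh x hx, hh y hy] at hxy
    exact congrArg Subtype.val (he (Subtype.ext hxy))
  · obtain ⟨x, hx⟩ := he' ⟨y, hy⟩
    exact ⟨x, x.2, (hh x x.2).trans (congrArg Subtype.val hx)⟩
  · exact hh x hx ▸ her ⟨x, hx⟩

theorem HasThreeEnds.exists_injective_movesOutward [Γ.LocallyFinite] [Finite Λ]
    (h : HasThreeEnds Γ) (hΓ : Γ.Connected) (htrans : IsVertexTransitive Γ) (o : V) :
    ∃ (F : V × Λ → V) (D : ℕ), F.Injective ∧ ∀ p, MovesOutward Γ o 1 D p.1 (F p) := by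
  obtain ⟨R, M, A, hA⟩ := h.exists_forall_isBranching hΓ htrans o
  let U : SetRel V V := {p | Γ.dist p.1 p.2 ≤ 2 * R}
  have : U.IsRefl := ⟨fun v => by simp [U]⟩
  have : U.IsSymm := ⟨fun v w hvw => Γ.dist_comm.trans_le hvw⟩
  obtain ⟨Z, hsep, hcov⟩ := exists_isSeparated_isCover U
  choose z hzZ hz using fun v => hcov (Set.mem_univ v)
  obtain ⟨T, hT, hTmove⟩ := exists_injective_movesOutward_of_isBranching hΓ (fun v => (hA v).1)
    (fun v => (hA v).2) (hsep.mono' fun _ _ => not_le.1) fun v => ⟨z v, hzZ v, hz v⟩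
  obtain ⟨f, hf, hfdist⟩ := htrans.exists_injective_dist_eq hΓ o
  let code (v : V) : closedBall Γ o (2 * R) :=
    ⟨f (z v) v, (hfdist _ _).trans_le (Γ.dist_comm.trans_le (hz v))⟩
  have := (finite_closedBall hΓ o (2 * R)).to_subtype
  obtain ⟨n, hn, ⟨j⟩⟩ :=
    exists_embedding_fin_to_fin_two (Λ × closedBall Γ o (2 * R)) (2 * R + 1)
  obtain ⟨S, hS, hSmove⟩ := exists_injective_movesOutward_iterate hΓ hT hTmove n
  refine ⟨fun p => S (⟨z p.1, hzZ p.1⟩, j (p.2, code p.1)), 2 * R + n * (M + 4 * R), ?_, ?_⟩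
  · rintro ⟨v, l⟩ ⟨w, m⟩ hvw
    obtain ⟨hzz, hj⟩ := Prod.ext_iff.1 (hS (Subtype.ext hvw))
    obtain ⟨rfl, hcode⟩ := Prod.ext_iff.1 (j.injective hj)
    replace hzz : z v = z w := congrArg Subtype.val hzz
    have hvw : f (z v) v = f (z v) w := by
      simpa [code, hzz] using congrArg Subtype.val hcode
    rw [hf _ hvw]
  · rintro ⟨v, l⟩
    obtain ⟨hgain, hdist⟩ := hSmove (⟨z v, hzZ v⟩, j (l, code v))
    have hov : Γ.dist o v ≤ Γ.dist o (z v) + Γ.dist (z v) v := hΓ.dist_triangle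
    have hzv : Γ.dist (z v) v ≤ 2 * R := Γ.dist_comm.trans_le (hz v)
    exact ⟨by dsimp only at *; lia, hΓ.dist_triangle.trans (add_le_add (hz v) hdist)⟩

/-- The pairs of a parent vertex and a label indexing the children in a tree rooted at `o`: the root
has a child for every label, all other vertices have one for every label but `z`. -/
def childLabels (o : V) (z : Λ) : Set (V × Λ) :=
  {p | p.1 = o ∨ p.2 ≠ z}

theorem exists_adj_label (hΓ : Γ.Connected) (htrans : IsVertexTransitive Γ) {z : Λ}
    {c : V → Λ} (hc : Set.InjOn c (closedBall Γ o 1)) (hcz : ∀ v, c v ≠ z) :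
    ∃ g : V → V × Λ, Set.InjOn g {o}ᶜ ∧ (∀ v ≠ o, (g v).2 ≠ z) ∧
      ∀ v ≠ o, MovesOutward Γ o 1 1 (g v).1 v := by
  obtain ⟨f, hf, hfdist⟩ := htrans.exists_injective_dist_eq hΓ o
  choose! y hyv hy using fun v (hv : v ≠ o) => exists_adj_dist_add_one_eq hΓ hv.symm
  have hone (v) (hv : v ≠ o) : Γ.dist (y v) v = 1 := SimpleGraph.dist_eq_one_iff_adj.2 (hyv v hv)
  have hball (v) (hv : v ≠ o) : f (y v) v ∈ closedBall Γ o 1 := ((hfdist _ _).trans (hone v hv)).le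
  refine ⟨fun v => (y v, c (f (y v) v)), fun v hv w hw hvw => ?_, fun v _ => hcz _,
    fun v hv => ⟨(hy v hv).le, (hone v hv).le⟩⟩
  obtain ⟨hyy, hcc⟩ := Prod.ext_iff.1 hvw
  dsimp only at hyy
  have hfv := hc (hball v hv) (hball w hw) hcc
  rw [← hyy] at hfv
  exact hf _ hfv

end LabelledTree

section FreeGroupCoding

variable {V α : Type*} {o : V} {z : α × Bool} {φ : V × (α × Bool) → V}
  {L : List (α × Bool)} {x : α × Bool}

/-- The letter cancelling the first letter of a word. The empty word has none, and the default `z`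
is used instead. -/
def cancellingLetter (z : α × Bool) : List (α × Bool) → α × Bool
  | [] => z
  | x :: _ => (x.1, !x.2)

theorem isReduced_cons_iff (z : α × Bool) :
    FreeGroup.IsReduced (x :: L) ↔ (L = [] ∨ x ≠ cancellingLetter z L) ∧ FreeGroup.IsReduced L := by
  cases L with
  | nil => simp
  | cons y L =>
    rw [FreeGroup.isReduced_cons_cons]
    simp [cancellingLetter, Prod.ext_iff, Bool.eq_not]

theorem toWord_mk_singleton_mul [DecidableEq α] (x : α × Bool) (u : FreeGroup α) :
    (FreeGroup.mk [x] * u).toWord = x :: u.toWord ∨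
      u.toWord = (x.1, !x.2) :: (FreeGroup.mk [x] * u).toWord := by
  rw [FreeGroup.toWord_mul, FreeGroup.toWord_mk, FreeGroup.reduce_singleton, List.singleton_append]
  by_cases h : FreeGroup.IsReduced (x :: u.toWord)
  · exact .inl h.reduce_eq
  · have hred := FreeGroup.isReduced_toWord (x := u)
    obtain ⟨y, L, hu⟩ := List.exists_cons_of_ne_nil fun hu : u.toWord = [] => h (by simp [hu])
    rw [hu] at h hred ⊢
    obtain rfl : x = (y.1, !y.2) := by
      by_contra hxy
      exact h ((isReduced_cons_iff x).2 ⟨.inr hxy, hred⟩)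
    have hstep : FreeGroup.Red.Step ((y.1, !y.2) :: y :: L) L := FreeGroup.Red.Step.cons_not_rev
    have hL : FreeGroup.IsReduced L := ((isReduced_cons_iff y).1 hred).2
    exact .inr (by rw [FreeGroup.reduce.Step.eq hstep, hL.reduce_eq, Bool.not_not])

section TreeVertices

variable [DecidableEq α]

/-- The vertex reached from the root `o` by reading a word from right to left, where `φ` sends a
parent and a label to a child. Swapping `z` with the cancelling letter turns the letters that
keep the word reduced into the labels other than `z`. -/
def treeVertex (φ : V × (α × Bool) → V) (o : V) (z : α × Bool) : List (α × Bool) → V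
  | [] => o
  | x :: L => φ (treeVertex φ o z L, Equiv.swap z (cancellingLetter z L) x)

theorem mem_childLabels_of_isReduced_cons (h : FreeGroup.IsReduced (x :: L)) :
    (treeVertex φ o z L, Equiv.swap z (cancellingLetter z L) x) ∈ childLabels o z := by
  obtain ⟨rfl | hx, -⟩ := (isReduced_cons_iff z).1 h
  · exact .inl rfl
  · exact .inr fun h =>
      hx ((Equiv.swap_apply_eq_iff.1 h).trans (Equiv.swap_apply_left _ _))

theorem treeVertex_cons_ne (hφ : Set.BijOn φ (childLabels o z) {o}ᶜ)
    (h : FreeGroup.IsReduced (x :: L)) : treeVertex φ o z (x :: L) ≠ o :=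
  hφ.mapsTo (mem_childLabels_of_isReduced_cons h)

theorem injOn_treeVertex (hφ : Set.BijOn φ (childLabels o z) {o}ᶜ) :
    Set.InjOn (treeVertex φ o z) {L | FreeGroup.IsReduced L} := by
  intro L
  induction L with
  | nil =>
    rintro - (_ | ⟨y, L'⟩) hL' h
    · rfl
    · exact (treeVertex_cons_ne hφ hL' h.symm).elim
  | cons x L ih =>
    rintro hL (_ | ⟨y, L'⟩) hL' h
    · exact (treeVertex_cons_ne hφ hL h).elim
    · obtain ⟨hvert, hlabel⟩ := Prod.ext_iff.1 (hφ.injOn (mem_childLabels_of_isReduced_cons hL)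
        (mem_childLabels_of_isReduced_cons hL') h)
      obtain rfl :=
        ih ((isReduced_cons_iff z).1 hL).2 ((isReduced_cons_iff z).1 hL').2 hvert
      rw [(Equiv.swap _ _).injective hlabel]

theorem exists_isReduced_treeVertex_eq (hφ : Set.BijOn φ (childLabels o z) {o}ᶜ) {ρ : V → ℕ}
    (hρ : ∀ p ∈ childLabels o z, ρ p.1 < ρ (φ p)) (v : V) :
    ∃ L, FreeGroup.IsReduced L ∧ treeVertex φ o z L = v := by
  induction hn : ρ v using Nat.strong_induction_on generalizing v with
  | _ n ih =>
    by_cases hv : v = o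
    · exact ⟨[], .nil, hv.symm⟩
    obtain ⟨⟨u, l⟩, hp, rfl⟩ := hφ.surjOn hv
    obtain ⟨L, hL, rfl⟩ := ih _ (hn ▸ hρ _ hp) u rfl
    refine ⟨Equiv.swap z (cancellingLetter z L) l :: L, (isReduced_cons_iff z).2 ⟨?_, hL⟩,
      by rw [treeVertex, Equiv.swap_apply_self]⟩
    refine hp.imp (fun hLo => ?_) fun hlz hl => hlz ?_
    · cases L with
      | nil => rfl
      | cons => exact (treeVertex_cons_ne hφ hL hLo).elim
    · rw [← Equiv.swap_apply_self z (cancellingLetter z L) l, hl, Equiv.swap_apply_right]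

end TreeVertices

theorem exists_freeGroup_equiv_of_bijOn (hφ : Set.BijOn φ (childLabels o z) {o}ᶜ) {ρ : V → ℕ}
    (hρ : ∀ p ∈ childLabels o z, ρ p.1 < ρ (φ p)) {r : V → V → Prop}
    (hr : ∀ ⦃v w⦄, r v w → r w v)
    (hrφ : ∀ p ∈ childLabels o z, r p.1 (φ p)) :
    ∃ e : FreeGroup α ≃ V, ∀ w i, r (e w) (e (w * .of i)) := by
  classical
  have hbij : (fun w : FreeGroup α => treeVertex φ o z w⁻¹.toWord).Bijective := by
    refine ⟨fun w u hwu => ?_, fun v => ?_⟩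
    · exact inv_injective (FreeGroup.toWord_injective
        (injOn_treeVertex hφ FreeGroup.isReduced_toWord FreeGroup.isReduced_toWord hwu))
    · obtain ⟨L, hL, rfl⟩ := exists_isReduced_treeVertex_eq hφ hρ v
      exact ⟨(FreeGroup.mk L)⁻¹, by simp [hL.reduce_eq]⟩
  have hcons {x : α × Bool} {u u' : FreeGroup α} (h : u'.toWord = x :: u.toWord) :
      r (treeVertex φ o z u.toWord) (treeVertex φ o z u'.toWord) := by
    have hred := h ▸ FreeGroup.isReduced_toWord (x := u')
    rw [h]
    exact hrφ _ (mem_childLabels_of_isReduced_cons hred)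
  refine ⟨.ofBijective _ hbij, fun w i => ?_⟩
  have hinv : (w * .of i)⁻¹ = FreeGroup.mk [(i, false)] * w⁻¹ := by
    rw [mul_inv_rev]; rfl
  simp only [Equiv.ofBijective_apply, hinv]
  rcases toWord_mk_singleton_mul (i, false) w⁻¹ with h | h
  · exact hcons h
  · exact hr (hcons h)

theorem HasThreeEnds.exists_freeGroup_equiv {Γ : SimpleGraph V} [Γ.LocallyFinite]
    (h : HasThreeEnds Γ) (hΓ : Γ.Connected) (htrans : IsVertexTransitive Γ) :
    ∃ k ≥ 2, ∃ (e : FreeGroup (Fin k) ≃ V) (D : ℕ), ∀ w i, Γ.dist (e w) (e (w * .of i)) ≤ D := by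
  obtain ⟨o⟩ := hΓ.nonempty
  obtain ⟨k, hk, c, z, hc, hcz⟩ := exists_injOn_fin_prod_bool (finite_closedBall hΓ o 1)
  obtain ⟨g, hg, hgz, hgmove⟩ := exists_adj_label hΓ htrans hc hcz
  obtain ⟨F, D, hF, hFmove⟩ := h.exists_injective_movesOutward (Λ := Fin k × Bool) hΓ htrans o
  have hFo (p) : F p ≠ o := fun hp => by simpa [hp] using (hFmove p).1
  obtain ⟨φ, hφ, hφmove⟩ := exists_bijOn_of_injOn_of_rel hF.injOn
    (fun p (_ : p ∈ childLabels o z) => hFo p) hg (fun v hv => .inr (hgz v hv))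
    (fun p v => MovesOutward Γ o 1 (max D 1) p.1 v)
    (fun p _ => (hFmove p).mono le_rfl (le_max_left _ _))
    fun v hv => (hgmove v hv).mono le_rfl (le_max_right _ _)
  obtain ⟨e, he⟩ := exists_freeGroup_equiv_of_bijOn hφ (ρ := Γ.dist o)
    (fun p hp => (hφmove p hp).1) (r := fun v w => Γ.dist v w ≤ max D 1)
    (fun v w hvw => Γ.dist_comm.trans_le hvw) fun p hp => (hφmove p hp).2
  exact ⟨k, hk, e, max D 1, he⟩

end FreeGroupCoding

section Actions

variable {H X : Type*} [Group H]

/-- The right action of `H` on `X` by right translations, transported along a bijection `H ≃ X`. -/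
def rightActionOfEquiv (e : H ≃ X) : RightAction H X where
  act x h := e (e.symm x * h)
  act_one x := by simp
  act_mul x h k := by simp [mul_assoc]

theorem isTransitive_rightActionOfEquiv (e : H ≃ X) : (rightActionOfEquiv e).IsTransitive :=
  fun x y => ⟨(e.symm x)⁻¹ * e.symm y, by simp [rightActionOfEquiv]⟩

theorem exists_forall_dist_le_of_closure_eq_top {Γ : SimpleGraph X} (hΓ : Γ.Connected) (e : H → X)
    {s : Set H} (hs : Subgroup.closure s = ⊤)
    (hbd : ∀ h ∈ s, ∃ D, ∀ w, Γ.dist (e w) (e (w * h)) ≤ D) (h : H) :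
    ∃ D, ∀ w, Γ.dist (e w) (e (w * h)) ≤ D := by
  have hh : h ∈ Subgroup.closure s := hs ▸ Subgroup.mem_top h
  induction hh using Subgroup.closure_induction with
  | mem h hh => exact hbd h hh
  | one => exact ⟨0, by simp⟩
  | mul h k _ _ hh hk =>
    obtain ⟨D, hD⟩ := hh
    obtain ⟨E, hE⟩ := hk
    refine ⟨D + E, fun w => hΓ.dist_triangle.trans (add_le_add (hD w) ?_)⟩
    rw [← mul_assoc]
    exact hE (w * h)
  | inv h _ hh =>
    obtain ⟨D, hD⟩ := hh
    refine ⟨D, fun w => Γ.dist_comm.trans_le ?_⟩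
    simpa using hD (w * h⁻¹)

end Actions

section CayleyGraph

open SimpleGraph

variable {G : Type*} [Group G] {s : Set G}

/-- Left multiplication by `g` as an automorphism of a Cayley graph. -/
def mulCayleyMulLeft (s : Set G) (g : G) : mulCayley s ≃g mulCayley s where
  toEquiv := Equiv.mulLeft g
  map_rel_iff' := mulCayley_adj_mul_iff_right

theorem isVertexTransitive_mulCayley (s : Set G) : IsVertexTransitive (mulCayley s) :=
  fun v w => ⟨mulCayleyMulLeft s (w * v⁻¹), inv_mul_cancel_right w v⟩

theorem connected_mulCayley (hs : Subgroup.closure s = ⊤) : (mulCayley s).Connected := by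
  have hone (g : G) : (mulCayley s).Reachable 1 g := by
    have hg : g ∈ Subgroup.closure s := hs ▸ Subgroup.mem_top g
    induction hg using Subgroup.closure_induction with
    | mem g hg =>
      by_cases h : 1 = g
      · exact h ▸ .rfl
      · exact Adj.reachable ((mulCayley_adj ..).2 ⟨h, .inl (by simpa)⟩)
    | one => rfl
    | mul g k _ _ hg hk =>
      exact hg.trans (by simpa [mulCayleyMulLeft] using hk.map (mulCayleyMulLeft s g).toHom)
    | inv g _ hg =>
      exact .symm (by simpa [mulCayleyMulLeft] using hg.map (mulCayleyMulLeft s g⁻¹).toHom)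
  exact ⟨fun g k => (hone g).symm.trans (hone k)⟩

theorem nonempty_locallyFinite_mulCayley (hs : s.Finite) :
    Nonempty (mulCayley s).LocallyFinite := by
  refine ⟨fun g => Set.Finite.fintype ?_⟩
  refine ((hs.image (g * ·)).union (hs.image (g * ·⁻¹))).subset fun k hk => ?_
  rcases ((mulCayley_adj ..).1 hk).2 with h | h
  · exact .inl ⟨_, h, by simp⟩
  · exact .inr ⟨_, h, by simp⟩

theorem isTranslationLike_rightActionOfEquiv {H : Type*} [Group H] {t : Set H} (e : H ≃ G)
    [(mulCayley s).LocallyFinite] (hs : Subgroup.closure s = ⊤) (ht : Subgroup.closure t = ⊤)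
    (hbd : ∀ h ∈ t, ∃ D, ∀ w, (mulCayley s).dist (e w) (e (w * h)) ≤ D) {d : G → G → ℝ}
    (hd : ∀ g x y, d (g * x) (g * y) = d x y) : (rightActionOfEquiv e).IsTranslationLike d := by
  have hΓ := connected_mulCayley hs
  refine ⟨fun x h hx => ?_, fun h => ?_⟩
  · simpa [rightActionOfEquiv, ← e.eq_symm_apply] using hx
  obtain ⟨D, hD⟩ := exists_forall_dist_le_of_closure_eq_top hΓ e ht hbd h
  obtain ⟨C, hC⟩ := ((finite_closedBall hΓ 1 D).image (d 1)).bddAbove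
  refine ⟨C, fun x => ?_⟩
  set y := (rightActionOfEquiv e).act x h
  have hy : (mulCayley s).dist x y ≤ D := by simpa [y, rightActionOfEquiv] using hD (e.symm x)
  have hxy : (mulCayley s).dist (x⁻¹ * x) (x⁻¹ * y) = (mulCayley s).dist x y :=
    dist_iso_apply hΓ (mulCayleyMulLeft s x⁻¹) x y
  rw [inv_mul_cancel] at hxy
  rw [← hd x⁻¹, inv_mul_cancel]
  exact hC ⟨_, hxy.trans_le hy, rfl⟩

theorem wordMetric_mul_left (S : Set G) (g x y : G) :
    wordMetric S (g * x) (g * y) = wordMetric S x y := by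
  simp [wordMetric, wordDist, mul_assoc]

end CayleyGraph

end TranslationLike

open SimpleGraph TranslationLike in
theorem transitive_translation_like_by_free_group_general
    (G : Type*) [Group G] [Group.FG G] [Infinite G] :
    (∃ a : RightAction (Multiplicative ℤ) G, a.IsTransitive ∧
       ∀ d : G → G → ℝ, (∀ g x y, d (g * x) (g * y) = d x y) → a.IsTranslationLike d) ∨
    (∃ k : ℕ, 2 ≤ k ∧ ∃ a : RightAction (FreeGroup (Fin k)) G, a.IsTransitive ∧
       ∀ d : G → G → ℝ, (∀ g x y, d (g * x) (g * y) = d x y) → a.IsTranslationLike d) := by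
  obtain ⟨s, hs, hfin⟩ := Group.fg_iff.1 ‹Group.FG G›
  have hΓ := connected_mulCayley hs
  obtain ⟨_⟩ := nonempty_locallyFinite_mulCayley hfin
  by_cases hends : HasThreeEnds (mulCayley s)
  · obtain ⟨k, hk, e, D, hD⟩ := hends.exists_freeGroup_equiv hΓ (isVertexTransitive_mulCayley s)
    refine .inr ⟨k, hk, _, isTransitive_rightActionOfEquiv e, fun d hd =>
      isTranslationLike_rightActionOfEquiv e hs (FreeGroup.closure_range_of _) ?_ hd⟩
    rintro _ ⟨i, rfl⟩
    exact ⟨D, fun w => hD w i⟩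
  · obtain ⟨e, D, hD⟩ := exists_int_equiv_of_not_hasThreeEnds hΓ hends
    refine .inl ⟨_, isTransitive_rightActionOfEquiv (Multiplicative.toAdd.trans e), fun d hd =>
      isTranslationLike_rightActionOfEquiv (t := {.ofAdd 1}) _ hs ?_ ?_ hd⟩
    · exact (Subgroup.eq_top_iff' _).2 fun w =>
        Subgroup.mem_closure_singleton.2 ⟨w.toAdd, by simp [← ofAdd_zsmul]⟩
    · rintro _ rfl
      exact ⟨D, fun w => hD w.toAdd⟩

/-- Every finitely generated infinite group admits a transitive translation-like action by
some free group: either by `ℤ` or by a finitely generated non-abelian free group. -/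
theorem transitive_translation_like_by_free_group
    (G : Type*) [Group G] [Group.FG G] [Infinite G] :
    (∃ a : RightAction (Multiplicative ℤ) G, a.IsTransitive ∧
       ∀ S : Set G, IsFinGenSet S → a.IsTranslationLike (wordMetric S)) ∨
    (∃ k : ℕ, 2 ≤ k ∧ ∃ a : RightAction (FreeGroup (Fin k)) G, a.IsTransitive ∧
       ∀ S : Set G, IsFinGenSet S → a.IsTranslationLike (wordMetric S)) :=
  (transitive_translation_like_by_free_group_general G).imp
    (fun ⟨a, ha, had⟩ => ⟨a, ha, fun S _ => had _ (TranslationLike.wordMetric_mul_left S)⟩)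
    fun ⟨k, hk, a, ha, had⟩ =>
      ⟨k, hk, a, ha, fun S _ => had _ (TranslationLike.wordMetric_mul_left S)⟩
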